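/- Let Δ be a Fano simplex of dimension d = 4 and Gorenstein index g = 1. Then mult(Δ) ≤ 128, and equality holds if and only if Δ ≅ Δ(P) where P is the 4×5 integer matrix with columns (1,0,0,0), (1,2,0,0), (1,2,8,0), (1,2,0,8), (−7,−6,−8,−8). -/

import Mathlib

open Finset Pointwise

/-- Cast an integer vector to a rational vector. -/
def toQ {d : ℕ} (v : Fin d → ℤ) : Fin d → ℚ := fun j => (v j : ℚ)

/-- An integer vector is primitive if the gcd of its entries is 1. -/
def IsPrimitive {d : ℕ} (v : Fin d → ℤ) : Prop := Finset.univ.gcd v = 1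

/-- The origin lies in the interior of the simplex with the given vertices,
i.e. the origin is a convex combination of the vertices with positive coefficients. -/
def OriginInInterior {d : ℕ} (v : Fin (d + 1) → Fin d → ℚ) : Prop :=
  ∃ w : Fin (d + 1) → ℚ, (∀ i, 0 < w i) ∧ ∑ i, w i = 1 ∧ ∀ j, ∑ i, w i * v i j = 0

/-- A Fano simplex, given by its tuple of vertices: the vertices are primitive integer
vectors, affinely independent, and the origin lies in the interior. -/
def IsFanoSimplex {d : ℕ} (v : Fin (d + 1) → Fin d → ℤ) : Prop :=
  AffineIndependent ℚ (fun i => toQ (v i)) ∧ (∀ i, IsPrimitive (v i)) ∧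
    OriginInInterior fun i => toQ (v i)

/-- The simplex spanned by the given vertices. -/
def simplexHull {d : ℕ} (v : Fin (d + 1) → Fin d → ℚ) : Set (Fin d → ℚ) :=
  convexHull ℚ (Set.range v)

/-- The dual body `Δ* = {u : ⟨u,v⟩ ≥ -1 for all v ∈ Δ}`. -/
def dualBody {d : ℕ} (S : Set (Fin d → ℚ)) : Set (Fin d → ℚ) :=
  {u | ∀ x ∈ S, -1 ≤ ∑ j, u j * x j}

/-- A set is a lattice polytope iff it is the convex hull of its integral points
(equivalently, all its vertices are lattice points). -/
def IsLatticeSet {d : ℕ} (S : Set (Fin d → ℚ)) : Prop :=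
  S = convexHull ℚ {x ∈ S | ∀ j, ∃ z : ℤ, x j = (z : ℚ)}

/-- The Gorenstein index: the least positive integer `g` such that `g • Δ*` is a
lattice polytope. -/
noncomputable def gorensteinIndex {d : ℕ} (v : Fin (d + 1) → Fin d → ℚ) : ℕ :=
  sInf {g : ℕ | 0 < g ∧ IsLatticeSet ((g : ℚ) • dualBody (simplexHull v))}

/-- The normalized volume `d! · vol(Δ)` of the simplex with the given vertices. -/
def normVol {d : ℕ} (v : Fin (d + 1) → Fin d → ℚ) : ℚ :=
  |(Matrix.of fun i j : Fin d => v i.succ j - v 0 j).det|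

/-- Two (Fano) simplices, given by their vertex tuples, are isomorphic iff some
unimodular integer matrix maps the vertex set of one onto the vertex set of the other. -/
def IsIsomorphicTo {d : ℕ} (v w : Fin (d + 1) → Fin d → ℤ) : Prop :=
  ∃ (U : Matrix (Fin d) (Fin d) ℤ) (σ : Equiv.Perm (Fin (d + 1))),
    IsUnit U.det ∧ ∀ i, U.mulVec (v i) = w (σ i)


/-- The multiplicity of a Fano simplex: the index in `ℤ^d` of the sublattice
generated by the vertices. -/
noncomputable def multOf {d : ℕ} (v : Fin (d + 1) → Fin d → ℤ) : ℕ :=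
  (AddSubgroup.closure (Set.range v)).index


theorem index_closure_eq_det (w : Fin 4 → Fin 4 → ℤ) (h : (Matrix.of w).det ≠ 0) :
    (AddSubgroup.closure (Set.range w)).index = (Matrix.of w).det.natAbs := by
  have hli : LinearIndependent ℤ w := Matrix.linearIndependent_rows_of_det_ne_zero h
  have hcl : AddSubgroup.closure (Set.range w)
      = (Submodule.span ℤ (Set.range w)).toAddSubgroup := by
    rw [Submodule.span_int_eq_addSubgroupClosure]
  rw [hcl, AddSubgroup.index_eq_natAbs_det (Pi.basisFun ℤ (Fin 4)) _
    (Module.Basis.span hli)]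
  congr 1
  rw [Pi.basisFun_det]
  congr 1
  ext i j
  simp only [Matrix.of_apply]
  exact congrFun (congrArg Subtype.val (Module.Basis.span_apply hli i)) j

theorem exists_rational_dual {v : Fin 5 → Fin 4 → ℚ} (hA : AffineIndependent ℚ v)
    (w : Fin 5 → ℚ) (hw : ∀ i, 0 < w i) (hs : ∑ i, w i = 1)
    (h0 : ∀ j, ∑ i, w i * v i j = 0) (i : Fin 5) :
    ∃ u : Fin 4 → ℚ, ∀ j, j ≠ i → ∑ k, u k * v j k = -1 := by
  have htop : affineSpan ℚ (Set.range v) = ⊤ := by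
    rw [hA.affineSpan_eq_top_iff_card_eq_finrank_add_one]; simp
  let b : AffineBasis (Fin 5) ℚ (Fin 4 → ℚ) := ⟨v, hA, htop⟩
  have hb : ∀ j, b j = v j := fun j => rfl
  let L := (b.coord i).linear
  have hL : ∀ x, b.coord i x = L x + b.coord i 0 := by
    intro x
    exact congrFun (AffineMap.decomp (b.coord i)) x
  have hLs : ∀ x : Fin 4 → ℚ, L x = ∑ k, x k * L (Pi.single k 1) := by
    intro x
    conv_lhs => rw [← Finset.univ_sum_single x]
    rw [map_sum]
    refine Finset.sum_congr rfl fun k _ => ?_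
    rw [← smul_eq_mul, ← map_smul]
    congr 1
    rw [← Pi.single_smul]; simp
  have hz : ∑ j, w j • v j = 0 := by
    ext k; simpa using h0 k
  have hc : b.coord i 0 = w i := by
    have h1 : ∑ j, w j * b.coord i (v j) = w i := by
      simp only [← hb, b.coord_apply]; simp
    have h2 : ∑ j, w j * b.coord i (v j) = b.coord i 0 := by
      have : ∀ j, w j * b.coord i (v j) = L (w j • v j) + w j * b.coord i 0 := by
        intro j; rw [hL (v j), map_smul, smul_eq_mul]; ring
      simp only [this]
      rw [Finset.sum_add_distrib, ← map_sum, hz, ← Finset.sum_mul, hs]; simp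
    rw [← h2, h1]
  refine ⟨fun k => L (Pi.single k 1) / w i, fun j hj => ?_⟩
  have h1 : b.coord i (v j) = 0 := by
    rw [← hb]; exact b.coord_apply_ne (Ne.symm hj)
  rw [hL, hLs, hc] at h1
  have h2 : ∑ k, L (Pi.single k 1) / w i * v j k
      = (∑ k, v j k * L (Pi.single k 1)) / w i := by
    rw [Finset.sum_div]; exact Finset.sum_congr rfl fun k _ => by ring
  rw [h2, div_eq_iff (hw i).ne']; linarith

theorem pair_zero {v : Fin 5 → Fin 4 → ℚ} (w : Fin 5 → ℚ)
    (h0 : ∀ j, ∑ i, w i * v i j = 0) (u : Fin 4 → ℚ) :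
    ∑ j, w j * ∑ k, u k * v j k = 0 := by
  simp only [Finset.mul_sum]
  rw [Finset.sum_comm]
  refine Finset.sum_eq_zero fun k _ => ?_
  have : ∑ j, w j * (u k * v j k) = u k * ∑ j, w j * v j k := by
    rw [Finset.mul_sum]; exact Finset.sum_congr rfl fun j _ => by ring
  rw [this, h0, mul_zero]

theorem pair_self {v : Fin 5 → Fin 4 → ℚ} (w : Fin 5 → ℚ) (hs : ∑ i, w i = 1)
    (h0 : ∀ j, ∑ i, w i * v i j = 0) (i : Fin 5) (u : Fin 4 → ℚ)
    (hu : ∀ j, j ≠ i → ∑ k, u k * v j k = -1) :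
    w i * (∑ k, u k * v i k + 1) = 1 := by
  have h := pair_zero w h0 u
  rw [← Finset.add_sum_erase _ _ (Finset.mem_univ i)] at h hs
  have : ∑ j ∈ Finset.univ.erase i, w j * ∑ k, u k * v j k
      = - ∑ j ∈ Finset.univ.erase i, w j := by
    rw [← Finset.sum_neg_distrib]
    refine Finset.sum_congr rfl fun j hj => ?_
    rw [hu j (Finset.ne_of_mem_erase hj)]; ring
  rw [this] at h
  linarith

theorem exists_int_dual {v : Fin 5 → Fin 4 → ℚ} (hA : AffineIndependent ℚ v)
    (w : Fin 5 → ℚ) (hw : ∀ i, 0 < w i) (hs : ∑ i, w i = 1)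
    (h0 : ∀ j, ∑ i, w i * v i j = 0)
    (hG : IsLatticeSet (dualBody (simplexHull v))) (i : Fin 5) :
    ∃ u : Fin 4 → ℤ, ∀ j, j ≠ i → ∑ k, (u k : ℚ) * v j k = -1 := by
  obtain ⟨u, hu⟩ := exists_rational_dual hA w hw hs h0 i
  have hself := pair_self w hs h0 i u hu
  have hmem : u ∈ dualBody (simplexHull v) := by
    intro x hx
    have hsub : simplexHull v ⊆ {x | -1 ≤ ∑ k, u k * x k} := by
      apply convexHull_min
      · rintro _ ⟨j, rfl⟩
        by_cases hj : j = i
        · subst hj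
          have : 0 < ∑ k, u k * v j k + 1 := by
            by_contra hneg
            push Not at hneg
            have := mul_nonpos_of_nonneg_of_nonpos (hw j).le hneg
            linarith
          simp only [Set.mem_ofPred_eq]; linarith
        · simp only [Set.mem_ofPred_eq]; rw [hu j hj]
      · intro x hx y hy a b ha hb hab
        simp only [Set.mem_ofPred_eq] at *
        have : ∑ k, u k * (a • x + b • y) k
            = a * (∑ k, u k * x k) + b * ∑ k, u k * y k := by
          rw [Finset.mul_sum, Finset.mul_sum, ← Finset.sum_add_distrib]
          exact Finset.sum_congr rfl fun k _ => by simp; ring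
        rw [this]; nlinarith
    exact hsub hx
  have hge : ∀ x ∈ dualBody (simplexHull v), ∀ j, -1 ≤ ∑ k, x k * v j k := by
    intro x hx j
    exact hx _ (subset_convexHull ℚ _ ⟨j, rfl⟩)
  have key : ∃ x ∈ {x ∈ dualBody (simplexHull v) | ∀ j, ∃ z : ℤ, x j = (z : ℚ)},
      ∑ j ∈ Finset.univ.erase i, (∑ k, x k * v j k + 1) ≤ 0 := by
    by_contra hcon
    push Not at hcon
    rw [hG] at hmem
    have hsub : convexHull ℚ {x ∈ dualBody (simplexHull v) | ∀ j, ∃ z : ℤ, x j = (z : ℚ)}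
        ⊆ {x | 0 < ∑ j ∈ Finset.univ.erase i, (∑ k, x k * v j k + 1)} := by
      apply convexHull_min
      · exact fun x hx => hcon x hx
      · intro x hx y hy a b ha hb hab
        simp only [Set.mem_ofPred_eq] at *
        have : ∑ j ∈ Finset.univ.erase i, (∑ k, (a • x + b • y) k * v j k + 1)
            = a * ∑ j ∈ Finset.univ.erase i, (∑ k, x k * v j k + 1)
            + b * ∑ j ∈ Finset.univ.erase i, (∑ k, y k * v j k + 1) := by
          rw [Finset.mul_sum, Finset.mul_sum, ← Finset.sum_add_distrib]
          refine Finset.sum_congr rfl fun j _ => ?_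
          have h3 : ∑ k, (a • x + b • y) k * v j k
              = a * ∑ k, x k * v j k + b * ∑ k, y k * v j k := by
            rw [Finset.mul_sum, Finset.mul_sum, ← Finset.sum_add_distrib]
            exact Finset.sum_congr rfl fun k _ => by simp; ring
          rw [h3]; linear_combination -hab
        rw [this]
        rcases ha.eq_or_lt with h | h
        · subst h
          have : b = 1 := by linarith
          subst this; linarith
        · have := mul_pos h hx
          have := mul_nonneg hb hy.le
          linarith
    have h := hsub hmem
    simp only [Set.mem_ofPred_eq] at h
    rw [Finset.sum_eq_zero] at h
    · exact lt_irrefl _ h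
    · intro j hj; rw [hu j (Finset.ne_of_mem_erase hj)]; ring
  obtain ⟨x, ⟨hx, hz⟩, hle⟩ := key
  choose z hz using hz
  refine ⟨z, fun j hj => ?_⟩
  simp only [← hz]
  have hnn : ∀ j ∈ Finset.univ.erase i, 0 ≤ ∑ k, x k * v j k + 1 :=
    fun j _ => by linarith [hge x hx j]
  have h1 := (Finset.sum_eq_zero_iff_of_nonneg hnn).1
    (le_antisymm hle (Finset.sum_nonneg hnn)) j (Finset.mem_erase.2 ⟨hj, Finset.mem_univ _⟩)
  linarith

/-- The integral pairing data of a reflexive simplex. -/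
theorem exists_data (v : Fin 5 → Fin 4 → ℤ) (hFano : IsFanoSimplex v)
    (hGor : gorensteinIndex (fun i => toQ (v i)) = 1) :
    ∃ (u : Fin 5 → Fin 4 → ℤ) (a : Fin 5 → ℤ), (∀ i, 0 < a i) ∧
      (∑ i, (1 : ℚ) / a i = 1) ∧
      ∀ i j, ∑ k, u i k * v j k = if i = j then a i - 1 else -1 := by
  obtain ⟨hA, -, w, hw, hs, h0⟩ := hFano
  have hG : IsLatticeSet (dualBody (simplexHull fun i => toQ (v i))) := by
    have hne : gorensteinIndex (fun i => toQ (v i)) ≠ 0 := by rw [hGor]; exact one_ne_zero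
    have hmem := Nat.sInf_mem (Nat.nonempty_of_sInf_eq_succ (k := 0) hGor)
    have h1 : sInf {g : ℕ | 0 < g ∧
      IsLatticeSet ((g : ℚ) • dualBody (simplexHull fun i => toQ (v i)))} = 1 := hGor
    rw [h1] at hmem
    simpa using hmem.2
  choose u hu using exists_int_dual hA w hw hs h0 hG
  have hself := fun i => pair_self w hs h0 i (fun k => (u i k : ℚ)) (hu i)
  have hcast : ∀ i j, ∑ k, (u i k : ℚ) * toQ (v j) k = ((∑ k, u i k * v j k : ℤ) : ℚ) := by
    intro i j; simp [toQ]
  simp only [hcast] at hu hself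
  refine ⟨u, fun i => ∑ k, u i k * v i k + 1, fun i => ?_, ?_, fun i j => ?_⟩
  · have h := hself i
    have : (0 : ℚ) < ((∑ k, u i k * v i k : ℤ) : ℚ) + 1 := by
      by_contra hneg
      push Not at hneg
      have := mul_nonpos_of_nonneg_of_nonpos (hw i).le hneg
      linarith
    exact_mod_cast this
  · refine (?_ : _ = ∑ i, w i).trans hs
    refine Finset.sum_congr rfl fun i _ => ?_
    have h := hself i
    have hne : ((∑ k, u i k * v i k : ℤ) : ℚ) + 1 ≠ 0 := by
      intro hz; rw [hz, mul_zero] at h; exact zero_ne_one h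
    rw [Int.cast_add, Int.cast_one, div_eq_iff hne]; exact h.symm
  · split_ifs with h
    · subst h; ring
    · exact_mod_cast hu i j (Ne.symm h)

theorem unit_fractions (a : Fin 5 → ℤ) (hpos : ∀ i, 0 < a i) (hm : Monotone a)
    (hs : ∑ i, (1 : ℚ) / a i = 1) (N : ℤ) (hN : N * a 4 = a 0 * a 1 * a 2 * a 3) :
    N ≤ 128 ∧ (N = 128 → a 0 = 2 ∧ a 1 = 8 ∧ a 2 = 8 ∧ a 3 = 8 ∧ a 4 = 8) := by
  have p0 := hpos 0
  have p1 := hpos 1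
  have p2 := hpos 2
  have p3 := hpos 3
  have p4 := hpos 4
  have h01 : a 0 ≤ a 1 := hm (by decide)
  have h12 : a 1 ≤ a 2 := hm (by decide)
  have h23 : a 2 ≤ a 3 := hm (by decide)
  have h34 : a 3 ≤ a 4 := hm (by decide)
  rw [Fin.sum_univ_five] at hs
  generalize a 0 = x at *
  generalize a 1 = y at *
  generalize a 2 = z at *
  generalize a 3 = s at *
  generalize a 4 = t at *
  have inv : ∀ m n : ℤ, 0 < m → m ≤ n → (1 : ℚ) / n ≤ 1 / m := by
    intro m n hm hmn
    exact one_div_le_one_div_of_le (by exact_mod_cast hm) (by exact_mod_cast hmn)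
  have ipos : ∀ m : ℤ, 0 < m → (0 : ℚ) < 1 / m := by
    intro m hm
    exact one_div_pos.2 (by exact_mod_cast hm)
  have qx := ipos x p0
  have qy := ipos y p1
  have qz := ipos z p2
  have qs := ipos s p3
  have qt := ipos t p4
  have i01 := inv x y p0 h01
  have i12 := inv y z p1 h12
  have i23 := inv z s p2 h23
  have i34 := inv s t p3 h34
  have canc : ∀ m : ℤ, 0 < m → (1 : ℚ) / m * m = 1 := by
    intro m hm
    have : (m : ℚ) ≠ 0 := by exact_mod_cast hm.ne'
    field_simp
  have cx := canc x p0
  have cy := canc y p1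
  have cz := canc z p2
  have bx : x ≤ 5 := by
    have : (x : ℚ) ≤ 5 := by
      have px : (0 : ℚ) < x := by exact_mod_cast p0
      nlinarith
    exact_mod_cast this
  have bx' : 2 ≤ x := by
    by_contra h
    have : x = 1 := by omega
    subst this
    push_cast at hs
    linarith
  have py : (0 : ℚ) < y := by exact_mod_cast p1
  have pz : (0 : ℚ) < z := by exact_mod_cast p2
  have by1 : (y : ℚ) * (1 - 1 / x) ≤ 4 := by nlinarith
  have bz1 : (z : ℚ) * (1 - 1 / x - 1 / y) ≤ 3 := by nlinarith
  have hxy : (1 : ℚ) / x + 1 / y < 1 := by linarith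
  have main : x * y * z ≤ 128 ∧ (x * y * z = 128 → x = 2 ∧ y = 8 ∧ z = 8) := by
    have by2 : y ≤ 8 := by
      have : (y : ℚ) ≤ 8 := by
        have : (1 : ℚ) / x ≤ 1 / 2 := by
          have := inv 2 x (by norm_num) bx'
          push_cast at this; exact this
        nlinarith
      exact_mod_cast this
    have bz2 : (z : ℚ) * (x * y - x - y) ≤ 3 * x * y := by
      have px : (0 : ℚ) < x := by exact_mod_cast p0
      have h5 := mul_le_mul_of_nonneg_left bz1 (mul_pos px py).le
      have h6 : (x : ℚ) * y * (z * (1 - 1 / x - 1 / y)) = z * (x * y - x - y) := by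
        field_simp; ring
      nlinarith
    have by3 : y * (x - 1) ≤ 4 * x := by
      have px : (0 : ℚ) < x := by exact_mod_cast p0
      have h5 := mul_le_mul_of_nonneg_left by1 px.le
      have h6 : (x : ℚ) * (y * (1 - 1 / x)) = y * (x - 1) := by
        field_simp
      have : (y : ℚ) * (x - 1) ≤ 4 * x := by linarith
      exact_mod_cast this
    have bz3 : z * (x * y - x - y) ≤ 3 * x * y := by exact_mod_cast bz2
    have hxy' : x + y < x * y := by
      have px : (0 : ℚ) < x := by exact_mod_cast p0
      have h5 := mul_lt_mul_of_pos_left hxy (mul_pos px py)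
      have h6 : (x : ℚ) * y * (1 / x + 1 / y) = x + y := by
        field_simp; ring
      have : (x : ℚ) + y < x * y := by linarith
      exact_mod_cast this
    clear hs qx qy qz qs qt i01 i12 i23 i34 cx cy cz by1 bz1 bz2 hxy inv ipos canc py pz hN hm hpos
    interval_cases x <;> interval_cases y <;> constructor <;> omega
  obtain ⟨m1, m2⟩ := main
  have hxyz : 0 < x * y * z := by positivity
  have hle : N ≤ x * y * z := by
    by_contra h
    push Not at h
    have h1 : x * y * z * s ≤ x * y * z * t := by gcongr
    have h2 : x * y * z * t < N * t := by gcongr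
    linarith
  refine ⟨hle.trans m1, fun h => ?_⟩
  subst h
  have h128 : x * y * z = 128 := le_antisymm m1 hle
  obtain ⟨rfl, rfl, rfl⟩ := m2 h128
  have hst : s = t := by omega
  subst hst
  have hs8 : s = 8 := by
    have : (s : ℚ) = 8 := by
      have h1 : (1 : ℚ) / s = 1 / 8 := by push_cast at hs; linarith
      have := canc s p3
      rw [h1] at this; linarith
    exact_mod_cast this
  exact ⟨rfl, rfl, rfl, hs8, hs8⟩

/-- The target simplex. -/
def simplexP : Fin 5 → Fin 4 → ℤ :=
  ![![1, 0, 0, 0], ![1, 2, 0, 0], ![1, 2, 8, 0], ![1, 2, 0, 8], ![-7, -6, -8, -8]]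

theorem mult_P : multOf simplexP = 128 := by
  have h : AddSubgroup.closure (Set.range simplexP)
      = AddSubgroup.closure (Set.range fun i : Fin 4 => simplexP i.castSucc) := by
    apply le_antisymm
    · rw [AddSubgroup.closure_le]
      rintro _ ⟨i, rfl⟩
      have hmem : ∀ i : Fin 4, simplexP i.castSucc ∈
          AddSubgroup.closure (Set.range fun i : Fin 4 => simplexP i.castSucc) :=
        fun i => AddSubgroup.subset_closure ⟨i, rfl⟩
      refine Fin.lastCases ?_ hmem i
      have : simplexP (Fin.last 4) = (-4 : ℤ) • simplexP (Fin.castSucc 0)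
          + ((-1 : ℤ) • simplexP (Fin.castSucc 1)
          + ((-1 : ℤ) • simplexP (Fin.castSucc 2) + (-1 : ℤ) • simplexP (Fin.castSucc 3))) := by
        decide
      rw [this]
      exact add_mem (zsmul_mem (hmem 0) _) (add_mem (zsmul_mem (hmem 1) _)
        (add_mem (zsmul_mem (hmem 2) _) (zsmul_mem (hmem 3) _)))
    · apply AddSubgroup.closure_mono
      rintro _ ⟨i, rfl⟩
      exact ⟨_, rfl⟩
  have hd : (Matrix.of fun i : Fin 4 => simplexP i.castSucc).det = 128 := by
    simp [Matrix.det_succ_row_zero, Fin.sum_univ_succ, Fin.succAbove, simplexP]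
  unfold multOf
  rw [h, index_closure_eq_det _ (by rw [hd]; norm_num), hd]
  rfl

theorem mult_iso {v w : Fin 5 → Fin 4 → ℤ} (h : IsIsomorphicTo v w) :
    multOf v = multOf w := by
  obtain ⟨U, σ, hU, h⟩ := h
  have hbij : Function.Bijective U.mulVec :=
    ⟨Matrix.mulVec_injective_of_isUnit ((Matrix.isUnit_iff_isUnit_det U).2 hU),
      fun x => ⟨U⁻¹.mulVec x, by rw [Matrix.mulVec_mulVec, Matrix.mul_nonsing_inv U hU, Matrix.one_mulVec]⟩⟩
  have hr : Set.range w = Set.image U.mulVecLin.toAddMonoidHom (Set.range v) := by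
    ext x
    constructor
    · rintro ⟨i, rfl⟩
      exact ⟨_, ⟨σ.symm i, rfl⟩, by simpa using h (σ.symm i)⟩
    · rintro ⟨_, ⟨i, rfl⟩, rfl⟩
      exact ⟨σ i, (h i).symm⟩
  unfold multOf
  rw [hr, ← AddMonoidHom.map_closure]
  exact (AddSubgroup.index_map_of_bijective (f := U.mulVecLin.toAddMonoidHom) hbij _).symm

/-- The main argument for a simplex whose pairing data is sorted. -/
theorem sorted_case (v : Fin 5 → Fin 4 → ℤ) (u : Fin 5 → Fin 4 → ℤ) (a : Fin 5 → ℤ)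
    (hpos : ∀ i, 0 < a i) (hm : Monotone a) (hs : ∑ i, (1 : ℚ) / a i = 1)
    (huv : ∀ i j, ∑ k, u i k * v j k = if i = j then a i - 1 else -1) :
    multOf v ≤ 128 ∧ (multOf v = 128 →
      ∃ U : Matrix (Fin 4) (Fin 4) ℤ, IsUnit U.det ∧ ∀ i, U.mulVec (v i) = simplexP i) := by
  let A : Matrix (Fin 4) (Fin 4) ℤ := Matrix.of fun i : Fin 4 => u i.castSucc
  let V : Matrix (Fin 4) (Fin 4) ℤ := Matrix.of fun i : Fin 4 => v i.castSucc
  have hAV : A * V.transpose = !![a 0 - 1, -1, -1, -1; -1, a 1 - 1, -1, -1;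
      -1, -1, a 2 - 1, -1; -1, -1, -1, a 3 - 1] := by
    ext i j
    rw [Matrix.mul_apply]
    have := huv i.castSucc j.castSucc
    simp only [A, V, Matrix.of_apply, Matrix.transpose_apply]
    rw [this]
    fin_cases i <;> fin_cases j <;> simp [Fin.ext_iff]
  have hdet : A.det * V.det * a 4 = a 0 * a 1 * a 2 * a 3 := by
    have h1 : A.det * V.det = (a 0 - 1) * (a 1 - 1) * (a 2 - 1) * (a 3 - 1)
        - (a 0 - 1) * (a 1 - 1) - (a 0 - 1) * (a 2 - 1) - (a 0 - 1) * (a 3 - 1)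
        - (a 1 - 1) * (a 2 - 1) - (a 1 - 1) * (a 3 - 1) - (a 2 - 1) * (a 3 - 1)
        - 2 * (a 0 - 1) - 2 * (a 1 - 1) - 2 * (a 2 - 1) - 2 * (a 3 - 1) - 3 := by
      rw [← Matrix.det_transpose V, ← Matrix.det_mul, hAV]
      simp [Matrix.det_succ_row_zero, Fin.sum_univ_succ, Fin.succAbove]
      ring
    rw [h1]
    have n : ∀ i, (a i : ℚ) ≠ 0 := fun i => by exact_mod_cast (hpos i).ne'
    rw [Fin.sum_univ_five] at hs
    have n0 := n 0
    have n1 := n 1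
    have n2 := n 2
    have n3 := n 3
    have n4 := n 4
    field_simp at hs
    have hs' : (a 0 * a 1 * a 2 * a 3 * a 4 : ℚ) = a 1 * a 2 * a 3 * a 4 + a 0 * a 2 * a 3 * a 4
      + a 0 * a 1 * a 3 * a 4 + a 0 * a 1 * a 2 * a 4 + a 0 * a 1 * a 2 * a 3 := by
      linear_combination -hs
    have hs'' : a 0 * a 1 * a 2 * a 3 * a 4 = a 1 * a 2 * a 3 * a 4 + a 0 * a 2 * a 3 * a 4
      + a 0 * a 1 * a 3 * a 4 + a 0 * a 1 * a 2 * a 4 + a 0 * a 1 * a 2 * a 3 := by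
      exact_mod_cast hs'
    linear_combination hs''
  obtain ⟨hle, heq⟩ := unit_fractions a hpos hm hs _ hdet
  have hprod : 0 < A.det * V.det := by
    have h1 : 0 < A.det * V.det * a 4 := by
      rw [hdet]
      exact mul_pos (mul_pos (mul_pos (hpos 0) (hpos 1)) (hpos 2)) (hpos 3)
    exact pos_of_mul_pos_left h1 (hpos 4).le
  have hV : V.det ≠ 0 := right_ne_zero_of_mul hprod.ne'
  have hA : A.det ≠ 0 := left_ne_zero_of_mul hprod.ne'
  have hdvd : multOf v ∣ V.det.natAbs := by
    rw [← index_closure_eq_det (fun i : Fin 4 => v i.castSucc) hV]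
    apply AddSubgroup.index_dvd_of_le
    apply AddSubgroup.closure_mono
    rintro _ ⟨i, rfl⟩
    exact ⟨_, rfl⟩
  have hle1 : multOf v ≤ V.det.natAbs :=
    Nat.le_of_dvd (Int.natAbs_pos.2 hV) hdvd
  have hA1 : 1 ≤ A.det.natAbs := Int.natAbs_pos.2 hA
  have hnat : A.det.natAbs * V.det.natAbs = (A.det * V.det).natAbs := (Int.natAbs_mul _ _).symm
  have hle2 : V.det.natAbs ≤ A.det.natAbs * V.det.natAbs := Nat.le_mul_of_pos_left _ hA1
  refine ⟨by omega, fun hmult => ?_⟩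
  have hN : A.det * V.det = 128 := by omega
  obtain ⟨a0, a1, a2, a3, a4⟩ := heq hN
  have hVn : V.det.natAbs = 128 := by omega
  have hAu : IsUnit A.det := by
    rw [Int.isUnit_iff_natAbs_eq]
    have : A.det.natAbs * 128 = 128 := by rw [← hVn, hnat, hN, hVn]; rfl
    omega
  let B : Matrix (Fin 4) (Fin 4) ℤ := !![4, 1, 1, 1; 3, 1, 1, 1; 4, 1, 2, 1; 4, 1, 1, 2]
  have hB : B.det = 1 := by
    simp [B, Matrix.det_succ_row_zero, Fin.sum_univ_succ, Fin.succAbove]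
  refine ⟨B * A, by rw [Matrix.det_mul, hB, one_mul]; exact hAu, fun j => ?_⟩
  rw [← Matrix.mulVec_mulVec]
  have hAv : A.mulVec (v j) = fun i : Fin 4 =>
      if i.castSucc = j then a i.castSucc - 1 else -1 := by
    ext i
    exact huv i.castSucc j
  rw [hAv]
  have hav : a = ![2, 8, 8, 8, 8] := by
    ext i; fin_cases i <;> assumption
  rw [hav]
  ext i
  fin_cases j <;> fin_cases i <;> rfl

/-- A Fano simplex of dimension 4 and Gorenstein index 1 has
multiplicity at most 128, with equality iff it is isomorphic to the simplex with
vertex matrix having columns (1,0,0,0), (1,2,0,0), (1,2,8,0), (1,2,0,8), (-7,-6,-8,-8). -/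
theorem mult_bound_dim4_gorenstein1
    (v : Fin 5 → Fin 4 → ℤ)
    (hFano : IsFanoSimplex v)
    (hGor : gorensteinIndex (fun i => toQ (v i)) = 1) :
    multOf v ≤ 128 ∧
      (multOf v = 128 ↔
        IsIsomorphicTo v
          ![![1, 0, 0, 0],
            ![1, 2, 0, 0],
            ![1, 2, 8, 0],
            ![1, 2, 0, 8],
            ![-7, -6, -8, -8]]) := by
  obtain ⟨u, a, hpos, hs, huv⟩ := exists_data v hFano hGor
  let τ := Tuple.sort a
  have hperm : IsIsomorphicTo v (v ∘ τ) :=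
    ⟨1, τ.symm, by simp, fun i => by simp⟩
  have hmult : multOf v = multOf (v ∘ τ) := mult_iso hperm
  obtain ⟨h1, h2⟩ := sorted_case (v ∘ τ) (u ∘ τ) (a ∘ τ) (fun i => hpos _)
    (Tuple.monotone_sort a)
    (by
      exact (Equiv.sum_comp τ fun i => (1 : ℚ) / a i).trans hs)
    (by
      intro i j
      have := huv (τ i) (τ j)
      simpa using this)
  rw [hmult]
  refine ⟨h1, fun h => ?_, fun h => ?_⟩
  · obtain ⟨U, hU, hUv⟩ := h2 h
    refine ⟨U, τ.symm, hU, fun i => ?_⟩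
    have := hUv (τ.symm i)
    simpa [simplexP] using this
  · rw [← hmult]
    exact (mult_iso h).trans mult_P
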